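/- arXiv:math/0210188 — 2 statements merged into one kernel-verified Lean document; each statement's English description precedes it below -/
import Mathlib

section
/- Assume 𝔤 is simple. Then every element of Tor(Γ_𝔨) has order at most 6. -/
open LieAlgebra

section CombinatorialDefs

variable {V : Type*} [AddCommGroup V] [Module ℂ V]

/-- `P` is a closed symmetric subsystem of `Ω`: `P ⊆ Ω`, `P = -P`, and `P` is closed
under addition within `Ω`. -/
def IsClosedSymmetricSubsystem (Ω P : Set V) : Prop :=
  P ⊆ Ω ∧ (∀ a ∈ P, -a ∈ P) ∧ ∀ a ∈ P, ∀ b ∈ P, a + b ∈ Ω → a + b ∈ P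

/-- `Pi` is a system of simple roots of `Q`: a linearly independent subset of `Q` such that
every element of `Q` is an integral linear combination of elements of `Pi` with coefficients
all nonnegative or all nonpositive. -/
def IsSimpleSystem (Q Pi : Set V) : Prop :=
  Pi ⊆ Q ∧ LinearIndependent ℂ (Subtype.val : Pi → V) ∧
    ∀ q ∈ Q, ∃ c : V →₀ ℤ, (c.support : Set V) ⊆ Pi ∧
      q = c.sum (fun v n => n • v) ∧ ((∀ v, 0 ≤ c v) ∨ (∀ v, c v ≤ 0))

/-- The Levi procedure: `Q' = ℤΣ ∩ Q` for a subset `Sig` of a system of simple roots of `Q`. -/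
def LeviStep (Q Q' : Set V) : Prop :=
  ∃ Pi Sig : Set V, IsSimpleSystem Q Pi ∧ Sig ⊆ Pi ∧
    Q' = {q ∈ Q | q ∈ AddSubgroup.closure Sig}

/-- The Dynkin procedure: `Q'` consists of those elements of `Q` whose coefficient of `α`
in the expansion in the simple system `Pi` is divisible by `n`. -/
def DynkinStep (Q Q' : Set V) : Prop :=
  ∃ Pi : Set V, IsSimpleSystem Q Pi ∧ ∃ α ∈ Pi, ∃ n : ℕ, 0 < n ∧
    Q' = {β ∈ Q | ∃ c : V →₀ ℤ, (c.support : Set V) ⊆ Pi ∧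
      β = c.sum (fun v k => k • v) ∧ (n : ℤ) ∣ c α}

end CombinatorialDefs

section LieSetup

variable (L : Type*) [LieRing L] [LieAlgebra ℂ L] [FiniteDimensional ℂ L]
  (H : LieSubalgebra ℂ L) [H.IsCartanSubalgebra]

/-- The set `Ω` of roots of `L` with respect to the Cartan subalgebra `H`, regarded as
(nonzero) linear functionals on `H` with nonzero root space. -/
def lieRoots : Set (Module.Dual ℂ H) :=
  {α | α ≠ 0 ∧ rootSpace H ⇑α ≠ ⊥}

/-- The group `Γ_𝔨 = ℤΩ / ℤP`. -/
abbrev GammaK (P : Set (Module.Dual ℂ H)) : Type _ :=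
  AddSubgroup.closure (lieRoots L H) ⧸
    (AddSubgroup.closure P).addSubgroupOf (AddSubgroup.closure (lieRoots L H))

/-- The image `ᾱ` of a root `α` in `Γ_𝔨 = ℤΩ / ℤP`. -/
def rootImage (P : Set (Module.Dual ℂ H)) {α : Module.Dual ℂ H}
    (hα : α ∈ lieRoots L H) : GammaK L H P :=
  QuotientAddGroup.mk ⟨α, AddSubgroup.subset_closure hα⟩

/-- The subspace `𝔨 = 𝔥 ⊕ ⨁_{α ∈ P} 𝔤_α` of `L`. -/
noncomputable def lieK (P : Set (Module.Dual ℂ H)) : Submodule ℂ L :=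
  H.toSubmodule ⊔ ⨆ α ∈ P, (rootSpace H ⇑α : LieSubmodule ℂ H L).toSubmodule

/-- The subspace `𝔪 = ⨁_{γ ∈ Ω \ P} 𝔤_γ` of `L`. -/
noncomputable def lieM (P : Set (Module.Dual ℂ H)) : Submodule ℂ L :=
  ⨆ γ ∈ lieRoots L H \ P, (rootSpace H ⇑γ : LieSubmodule ℂ H L).toSubmodule

end LieSetup

/-! Characters separate torsion: choose `χ : Γ_𝔨 → ℚ/ℤ` for which `χ x` has the same order as `x`,
and lift it to a functional `g : ℤΩ → ℚ`. Among the translates of `g` by integral functionals take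
one minimising `∑ g(α)²` over all roots `α`; comparing it with its translates by coroots gives
`g(α) ≤ 1` for every root `α`. Now choose a base on which `g ≥ 0`, with highest root `θ`.

If `g` vanishes on the base, then `χ x = 0`. Otherwise let `α_k` be a simple root with `g(α_k) > 0`
and let `c_k` be its coefficient in `θ`. For `β ∈ P` the number `g(β)` is an integer, so it lies in
`{-1, 0, 1}`, and comparison with `θ` shows that the coefficient of `α_k` in `β` is `c_k g(β)`. By
linearity the same holds for every `y ∈ ℤΩ` with a nonzero multiple in `ℤP`, so `c_k g(y)` is an
integer: `c_k` annihilates `χ x`.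

Finally `c_k ≤ 6`. The coefficients of `θ`, together with `1` at the vertex `-θ`, label the extended
Dynkin diagram so that twice each label is the weighted sum of the neighbouring ones. Labels drop
by at most one at each step towards `-θ`, so a vertex `v` with the maximal label `m` may be taken to
have a neighbour labelled `m - 1`. If `m ≥ 7`, the additivity at `v` forces another neighbour whose
label exceeds `m / 2` by at most `1`, and the additivity there is contradictory. -/

section AdditiveLabelling

lemma exists_adj_dist_add_one_eq {V : Type*} {G : SimpleGraph V} {o v : V} (hG : G.Connected)
    (hv : v ≠ o) :
    ∃ u, G.Adj v u ∧ G.dist u o + 1 = G.dist v o := by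
  obtain ⟨p, hp⟩ := hG.exists_walk_length_eq_dist v o
  cases p with
  | nil => exact absurd rfl hv
  | @cons _ u _ h q =>
    refine ⟨_, h, ?_⟩
    have hq := G.dist_le q
    have htri := hG.dist_triangle (u := v) (v := u) (w := o)
    rw [SimpleGraph.dist_eq_one_iff_adj.2 h] at htri
    rw [SimpleGraph.Walk.length_cons] at hp
    lia

variable {V : Type*} [Fintype V] {G : SimpleGraph V} {w : V → V → ℕ} {a : V → ℕ} {o u v : V}

/-- An additive function on a graph with edge weights `w`: twice the label of a vertex is the
weighted sum of the labels of its neighbours. The weights need not be symmetric; on an extended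
Dynkin diagram they are the absolute values of the off-diagonal Cartan integers. -/
structure IsAdditiveLabelling (G : SimpleGraph V) (w : V → V → ℕ) (a : V → ℕ) : Prop where
  weight_ne_zero_iff (v u : V) : w v u ≠ 0 ↔ G.Adj v u
  two_mul_eq_sum (v : V) : 2 * a v = ∑ u, w v u * a u

namespace IsAdditiveLabelling

lemma le_mul_of_adj (ha : IsAdditiveLabelling G w a) (h : G.Adj v u) : a u ≤ w v u * a u :=
  Nat.le_mul_of_pos_left _ (Nat.pos_of_ne_zero ((ha.weight_ne_zero_iff v u).2 h))

lemma le_two_mul_of_adj (ha : IsAdditiveLabelling G w a) (h : G.Adj v u) : a u ≤ 2 * a v :=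
  calc a u ≤ w v u * a u := ha.le_mul_of_adj h
    _ ≤ ∑ x, w v x * a x :=
      Finset.single_le_sum (f := fun x ↦ w v x * a x) (fun _ _ ↦ Nat.zero_le _) (Finset.mem_univ u)
    _ = 2 * a v := (ha.two_mul_eq_sum v).symm

lemma add_le_two_mul (ha : IsAdditiveLabelling G w a) {u' : V} (h : G.Adj v u) (h' : G.Adj v u')
    (hne : u ≠ u') : a u + a u' ≤ 2 * a v := by
  classical
  calc a u + a u' ≤ w v u * a u + w v u' * a u' :=
        add_le_add (ha.le_mul_of_adj h) (ha.le_mul_of_adj h')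
    _ = ∑ x ∈ {u, u'}, w v x * a x := (Finset.sum_pair (f := fun x ↦ w v x * a x) hne).symm
    _ ≤ ∑ x, w v x * a x := Finset.sum_le_sum_of_subset (Finset.subset_univ _)
    _ = 2 * a v := (ha.two_mul_eq_sum v).symm

lemma le_add_one_of_dist_add_one_eq (ha : IsAdditiveLabelling G w a) (hG : G.Connected)
    (ho : a o = 1) (h : G.Adj v u) (hd : G.dist u o + 1 = G.dist v o) : a v ≤ a u + 1 := by
  induction hn : G.dist u o generalizing u v with
  | zero =>
    obtain rfl : u = o := hG.dist_eq_zero_iff.1 hn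
    have := ha.le_two_mul_of_adj h.symm
    lia
  | succ n ih =>
    have huo : u ≠ o := by rintro rfl; simp at hn
    obtain ⟨x, hux, hx⟩ := exists_adj_dist_add_one_eq hG huo
    have hvx : v ≠ x := by rintro rfl; lia
    have hu : a u ≤ a x + 1 := ih hux hx (by lia)
    have := ha.add_le_two_mul h.symm hux hvx
    lia

-- Walking towards `o`, labels drop by at most one, so the first step down from the maximum is
-- a drop by exactly one.
lemma exists_adj_add_one_eq_max (ha : IsAdditiveLabelling G w a) (hG : G.Connected)
    (ho : a o = 1) (hu : 1 < a u) :
    ∃ v x, G.Adj v x ∧ a x + 1 = a v ∧ ∀ y, a y ≤ a v := by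
  have : Nonempty V := ⟨o⟩
  obtain ⟨m, -, hm⟩ := Finset.univ.exists_max_image a Finset.univ_nonempty
  obtain ⟨v, hv, hvmin⟩ :=
    (Finset.univ.filter (a · = a m)).exists_min_image (G.dist · o) ⟨m, by simp⟩
  simp only [Finset.mem_filter, Finset.mem_univ, true_and, forall_const] at hv hvmin hm
  have hvo : v ≠ o := by rintro rfl; have := hm u; lia
  obtain ⟨x, hvx, hx⟩ := exists_adj_dist_add_one_eq hG hvo
  have hxm : a x ≠ a m := fun h ↦ by have := hvmin x h; lia
  have := ha.le_add_one_of_dist_add_one_eq hG ho hvx hx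
  have := hm x
  exact ⟨v, x, hvx, by lia, fun y ↦ (hm y).trans hv.ge⟩

lemma sum_weight_mul_sub (ha : IsAdditiveLabelling G w a) (v : V) :
    ∑ y, (w v y : ℤ) * (2 * a y - a v) = (4 - ∑ y, (w v y : ℤ)) * a v := by
  have h : (2 * a v : ℤ) = ∑ y, (w v y : ℤ) * a y := mod_cast ha.two_mul_eq_sum v
  simp only [mul_sub, Finset.sum_sub_distrib, ← Finset.sum_mul, mul_left_comm _ (2 : ℤ),
    ← Finset.mul_sum, ← h]
  ring

lemma weight_mul_sub_nonneg (ha : IsAdditiveLabelling G w a) (v y : V) :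
    0 ≤ (w v y : ℤ) * (2 * a y - a v) := by
  by_cases hy : w v y = 0
  · simp [hy]
  · have := ha.le_two_mul_of_adj ((ha.weight_ne_zero_iff v y).1 hy).symm
    exact mul_nonneg (Nat.cast_nonneg _) (by lia)

lemma weight_mul_sub_le (ha : IsAdditiveLabelling G w a) (v y : V) :
    (w v y : ℤ) * (2 * a y - a v) ≤ (4 - ∑ y, (w v y : ℤ)) * a v := by
  rw [← ha.sum_weight_mul_sub v]
  exact Finset.single_le_sum (f := fun y ↦ (w v y : ℤ) * (2 * a y - a v))
    (fun y _ ↦ ha.weight_mul_sub_nonneg v y) (Finset.mem_univ y)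

lemma sum_weight_eq_three (ha : IsAdditiveLabelling G w a) {x : V} (hvx : G.Adj v x)
    (hx : a x + 1 = a v) (hmax : ∀ y, a y ≤ a v) (h3 : 3 ≤ a v) : ∑ y, w v y = 3 := by
  have hw : 0 < w v x := Nat.pos_of_ne_zero ((ha.weight_ne_zero_iff v x).2 hvx)
  have hlower : 2 * a v < (∑ y, w v y) * a v := by
    rw [ha.two_mul_eq_sum v, Finset.sum_mul]
    exact Finset.sum_lt_sum (fun y _ ↦ Nat.mul_le_mul_left _ (hmax y))
      ⟨x, Finset.mem_univ x, Nat.mul_lt_mul_of_pos_left (by lia) hw⟩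
  have hupper : 0 < (4 - ∑ y, (w v y : ℤ)) * a v :=
    (mul_pos (mod_cast hw) (by lia)).trans_le (ha.weight_mul_sub_le v x)
  have hgt := Nat.lt_of_mul_lt_mul_right hlower
  have hlt := pos_of_mul_pos_left hupper (Nat.cast_nonneg _)
  rw [← Nat.cast_sum] at hlt
  lia

lemma exists_adj_two_mul_le_add_two (ha : IsAdditiveLabelling G w a) {x : V} (hvx : G.Adj v x)
    (hx : a x + 1 = a v) (hmax : ∀ y, a y ≤ a v) (h5 : 5 ≤ a v) :
    ∃ y, G.Adj v y ∧ a v < 2 * a y ∧ 2 * a y ≤ a v + 2 := by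
  classical
  have hsum := ha.sum_weight_mul_sub v
  have hxle := ha.weight_mul_sub_le v x
  rw [← Nat.cast_sum, ha.sum_weight_eq_three hvx hx hmax (by lia)] at hsum hxle
  have hwx : w v x = 1 := by
    have hw := (ha.weight_ne_zero_iff v x).2 hvx
    by_contra hne
    have h2 : (2 : ℤ) ≤ w v x := by lia
    have := mul_le_mul_of_nonneg_right h2 (by lia : (0 : ℤ) ≤ 2 * a x - a v)
    lia
  rw [← Finset.add_sum_erase _ _ (Finset.mem_univ x), hwx] at hsum
  obtain ⟨y, hy, hy0⟩ : ∃ y ∈ Finset.univ.erase x, (w v y : ℤ) * (2 * a y - a v) ≠ 0 :=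
    Finset.exists_ne_zero_of_sum_ne_zero (by lia)
  have hvy : w v y ≠ 0 := Nat.cast_ne_zero.1 (left_ne_zero_of_mul hy0)
  have hylt := (pos_iff_pos_of_mul_pos ((ha.weight_mul_sub_nonneg v y).lt_of_ne' hy0)).1 (by lia)
  have hyle : (2 * a y - a v : ℤ) ≤ 2 :=
    calc (2 * a y - a v : ℤ) ≤ w v y * (2 * a y - a v) :=
          le_mul_of_one_le_left hylt.le (by lia)
      _ ≤ ∑ y ∈ Finset.univ.erase x, (w v y : ℤ) * (2 * a y - a v) :=
        Finset.single_le_sum (f := fun y ↦ (w v y : ℤ) * (2 * a y - a v))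
          (fun y _ ↦ ha.weight_mul_sub_nonneg v y) hy
      _ = 2 := by lia
  exact ⟨y, (ha.weight_ne_zero_iff v y).1 hvy, by lia, by lia⟩

lemma add_two_lt_two_mul_of_lt_two_mul (ha : IsAdditiveLabelling G w a) {y : V} (hvy : G.Adj v y)
    (h7 : 7 ≤ a v) (hlt : a v < 2 * a y) : a v + 2 < 2 * a y := by
  classical
  by_contra! hle
  have hsum := ha.two_mul_eq_sum y
  rw [← Finset.add_sum_erase _ _ (Finset.mem_univ v)] at hsum
  have hw : w y v = 1 := by
    have := (ha.weight_ne_zero_iff y v).2 hvy.symm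
    by_contra hne
    have : 2 * a v ≤ w y v * a v := Nat.mul_le_mul_right _ (by lia)
    lia
  rw [hw, one_mul] at hsum
  obtain ⟨z, hz, hz0⟩ : ∃ z ∈ Finset.univ.erase v, w y z * a z ≠ 0 :=
    Finset.exists_ne_zero_of_sum_ne_zero (by lia)
  have hyz : G.Adj y z := (ha.weight_ne_zero_iff y z).1 (left_ne_zero_of_mul hz0)
  have hzle : a z ≤ 2 * a y - a v :=
    calc a z ≤ w y z * a z := ha.le_mul_of_adj hyz
      _ ≤ ∑ z ∈ Finset.univ.erase v, w y z * a z :=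
        Finset.single_le_sum (f := fun z ↦ w y z * a z) (fun _ _ ↦ Nat.zero_le _) hz
      _ = 2 * a y - a v := by lia
  have := ha.le_two_mul_of_adj hyz.symm
  lia

theorem le_six (ha : IsAdditiveLabelling G w a) (hG : G.Connected) (ho : a o = 1) (u : V) :
    a u ≤ 6 := by
  rcases le_or_gt (a u) 1 with hu | hu
  · lia
  obtain ⟨v, x, hvx, hx, hmax⟩ := ha.exists_adj_add_one_eq_max hG ho hu
  by_contra! h
  have h7 : 7 ≤ a v := Nat.succ_le_of_lt (h.trans_le (hmax u))
  obtain ⟨y, hvy, hlt, hle⟩ := ha.exists_adj_two_mul_le_add_two hvx hx hmax (by lia)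
  exact (ha.add_two_lt_two_mul_of_lt_two_mul hvy h7 hlt).not_ge hle

end IsAdditiveLabelling

end AdditiveLabelling

section HighestRoot

variable {ι R M N : Type*} [CommRing R] [AddCommGroup M] [Module R M]
  [AddCommGroup N] [Module R N] {P : RootPairing ι R M N}

lemma rootSpanMem_reflectionPerm [P.IsCrystallographic] (i j : ι) :
    P.rootSpanMem ℤ (P.reflectionPerm j i) =
      P.rootSpanMem ℤ i - P.pairingIn ℤ i j • P.rootSpanMem ℤ j :=
  Subtype.ext (by simp [P.root_reflectionPerm, P.reflection_apply_root' ℤ])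

variable [CharZero R]

/-- The coefficients of the root `P.root i` in the simple roots of `b`, as a function on `b`. -/
noncomputable def simpleCoeff (b : P.Base) (i : ι) : b.support → ℤ :=
  b.toWeightBasisInt.repr (P.rootSpanMem ℤ i)

lemma toWeightBasisInt_eq_rootSpanMem (b : P.Base) (k : b.support) :
    b.toWeightBasisInt k = P.rootSpanMem ℤ k :=
  Subtype.ext (b.coe_toWeightBasisInt_apply k)

lemma sum_simpleCoeff_smul_rootSpanMem (b : P.Base) (i : ι) :
    ∑ k, simpleCoeff b i k • P.rootSpanMem ℤ k = P.rootSpanMem ℤ i := by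
  simp only [simpleCoeff, ← toWeightBasisInt_eq_rootSpanMem, b.toWeightBasisInt.sum_repr]

lemma map_rootSpanMem_eq_sum {A : Type*} [AddCommGroup A] (b : P.Base)
    (g : P.rootSpan ℤ →ₗ[ℤ] A) (i : ι) :
    g (P.rootSpanMem ℤ i) = ∑ k, simpleCoeff b i k • g (P.rootSpanMem ℤ k) := by
  simp only [← map_zsmul, ← map_sum, sum_simpleCoeff_smul_rootSpanMem]

lemma simpleCoeff_injective (b : P.Base) : Function.Injective (simpleCoeff b) := fun _ _ h ↦
  P.root.injective (congrArg Subtype.val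
    (b.toWeightBasisInt.repr.injective (DFunLike.coe_injective h)))

lemma simpleCoeff_ne_zero (b : P.Base) (i : ι) : simpleCoeff b i ≠ 0 := by
  intro h
  have hi : (0 : P.rootSpan ℤ) = P.rootSpanMem ℤ i := by
    simpa [h] using sum_simpleCoeff_smul_rootSpanMem b i
  exact P.ne_zero i (congrArg Subtype.val hi.symm)

lemma simpleCoeff_eq_of_root_eq_sum (b : P.Base) {i : ι} {f : ι → ℤ}
    (h : P.root i = ∑ j ∈ b.support, f j • P.root j) (k : b.support) : simpleCoeff b i k = f k := by
  have hi : P.rootSpanMem ℤ i = ∑ k : b.support, f k • b.toWeightBasisInt k := by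
    refine Subtype.ext ?_
    simpa [Finset.sum_attach b.support (fun j ↦ f j • P.root j)] using h
  rw [simpleCoeff, hi, b.toWeightBasisInt.repr_sum_self]

lemma simpleCoeff_nonneg_or_nonpos (b : P.Base) (i : ι) :
    0 ≤ simpleCoeff b i ∨ simpleCoeff b i ≤ 0 := by
  obtain ⟨f, -, hf, h⟩ := b.exists_root_eq_sum_int i
  have hcoeff : simpleCoeff b i = fun k : b.support ↦ f k :=
    funext (simpleCoeff_eq_of_root_eq_sum b h)
  rw [hcoeff]
  exact hf.imp (fun hpos k ↦ hpos.le k) (fun hneg k ↦ hneg.le k)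

lemma simpleCoeff_reflectionPerm [P.IsCrystallographic] (b : P.Base) (i j : ι) :
    simpleCoeff b (P.reflectionPerm j i) =
      simpleCoeff b i - P.pairingIn ℤ i j • simpleCoeff b j := by
  simp only [simpleCoeff, rootSpanMem_reflectionPerm, map_sub, map_zsmul, Finsupp.coe_sub,
    Finsupp.coe_smul]

lemma simpleCoeff_reflectionPerm_self (b : P.Base) (i : ι) :
    simpleCoeff b (P.reflectionPerm i i) = -simpleCoeff b i := by
  rw [simpleCoeff, P.rootSpanMem_reflectionPerm_self, map_neg, Finsupp.coe_neg, simpleCoeff]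

lemma simpleCoeff_simple_nonneg (b : P.Base) (k : b.support) : 0 ≤ simpleCoeff b k := by
  rw [simpleCoeff, ← toWeightBasisInt_eq_rootSpanMem, b.toWeightBasisInt.repr_self]
  exact Finsupp.single_nonneg.2 zero_le_one

lemma pairingIn_eq_sum_simpleCoeff [P.IsCrystallographic] (b : P.Base) (i j : ι) :
    P.pairingIn ℤ i j = ∑ k, simpleCoeff b i k * P.pairingIn ℤ k j :=
  map_rootSpanMem_eq_sum b (P.coroot'In ℤ j) i

variable {b : P.Base} {θ θ' : ι}

lemma simpleCoeff_nonneg_of_maximal (hθ : ∀ i, simpleCoeff b θ ≤ simpleCoeff b i → i = θ) :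
    0 ≤ simpleCoeff b θ := by
  refine (simpleCoeff_nonneg_or_nonpos b θ).resolve_right fun h ↦ simpleCoeff_ne_zero b θ ?_
  have hrefl := simpleCoeff_reflectionPerm_self b θ
  rw [hθ (P.reflectionPerm θ θ) (hrefl ▸ h.trans (neg_nonneg.2 h))] at hrefl
  exact self_eq_neg.1 hrefl

lemma eq_highest_of_le (hθ : ∀ i, simpleCoeff b i ≤ simpleCoeff b θ) (i : ι)
    (h : simpleCoeff b θ ≤ simpleCoeff b i) : i = θ :=
  simpleCoeff_injective b ((hθ i).antisymm h)

variable [P.IsCrystallographic]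

lemma pairingIn_nonneg_of_maximal (hθ : ∀ i, simpleCoeff b θ ≤ simpleCoeff b i → i = θ)
    (k : b.support) : 0 ≤ P.pairingIn ℤ θ k := by
  by_contra! hneg
  have hrefl := simpleCoeff_reflectionPerm b θ k
  have hle : simpleCoeff b θ ≤ simpleCoeff b θ - P.pairingIn ℤ θ k • simpleCoeff b k :=
    (le_sub_self_iff _).2 (smul_nonpos_of_nonpos_of_nonneg hneg.le (simpleCoeff_simple_nonneg b k))
  rw [hθ (P.reflectionPerm k θ) (hrefl ▸ hle)] at hrefl
  exact smul_ne_zero hneg.ne (simpleCoeff_ne_zero b k) (sub_eq_self.1 hrefl.symm)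

variable [Finite ι]

lemma pairingIn_nonneg_symm {i j : ι} (h : 0 ≤ P.pairingIn ℤ i j) : 0 ≤ P.pairingIn ℤ j i :=
  not_lt.1 ((P.pairingIn_lt_zero_iff ℤ).not.1 h.not_gt)

lemma pairingIn_ne_zero_symm {i j : ι} (h : P.pairingIn ℤ i j ≠ 0) : P.pairingIn ℤ j i ≠ 0 :=
  h.lt_or_gt.elim (fun hneg ↦ ((P.pairingIn_lt_zero_iff ℤ).1 hneg).ne)
    (fun hpos ↦ ((P.zero_lt_pairingIn_iff' ℤ).1 hpos).ne')

variable [IsDomain R]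

lemma pairingIn_simple_le_zero {k l : b.support} (hkl : k ≠ l) : P.pairingIn ℤ k l ≤ 0 :=
  b.pairingIn_le_zero_of_ne (Subtype.coe_injective.ne hkl) k.2 l.2

lemma simpleCoeff_pos_of_maximal [P.IsReduced] [P.IsIrreducible]
    (hθ : ∀ i, simpleCoeff b θ ≤ simpleCoeff b i → i = θ) (k : b.support) :
    0 < simpleCoeff b θ k := by
  have hnonneg := simpleCoeff_nonneg_of_maximal hθ
  obtain ⟨l, hl⟩ := Function.ne_iff.1 (simpleCoeff_ne_zero b θ)
  refine b.induction_on_cartanMatrix (fun k ↦ 0 < simpleCoeff b θ k)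
    ((hnonneg l).lt_of_ne' hl) fun i j hi hij ↦ (hnonneg j).lt_of_ne' fun hj ↦ ?_
  have hne : i ≠ j := by rintro rfl; exact hi.ne' hj
  have hij' : P.pairingIn ℤ i j < 0 :=
    (P.pairingIn_lt_zero_iff ℤ).1 ((pairingIn_simple_le_zero hne.symm).lt_of_ne hij)
  refine (pairingIn_nonneg_of_maximal hθ j).not_gt ?_
  rw [pairingIn_eq_sum_simpleCoeff b]
  refine Finset.sum_neg' (fun m _ ↦ ?_) ⟨i, Finset.mem_univ i, mul_neg_of_pos_of_neg hi hij'⟩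
  rcases eq_or_ne m j with rfl | hm
  · simp [hj]
  · exact mul_nonpos_of_nonneg_of_nonpos (hnonneg m) (pairingIn_simple_le_zero hm)

lemma pairingIn_pos_of_maximal [P.IsReduced] [P.IsIrreducible]
    (hθ : ∀ i, simpleCoeff b θ ≤ simpleCoeff b i → i = θ)
    (hθ' : ∀ i, simpleCoeff b θ' ≤ simpleCoeff b i → i = θ') : 0 < P.pairingIn ℤ θ θ' := by
  have hdom (k : b.support) := pairingIn_nonneg_symm (pairingIn_nonneg_of_maximal hθ' k)
  have hsum (i : ι) := pairingIn_eq_sum_simpleCoeff b i θ'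
  obtain ⟨k, -, hk⟩ : ∃ k ∈ Finset.univ, simpleCoeff b θ' k * P.pairingIn ℤ k θ' ≠ 0 :=
    Finset.exists_ne_zero_of_sum_ne_zero (by rw [← hsum, P.pairingIn_same]; norm_num)
  rw [hsum]
  exact Finset.sum_pos' (fun l _ ↦ mul_nonneg (simpleCoeff_pos_of_maximal hθ l).le (hdom l))
    ⟨k, Finset.mem_univ k, mul_pos (simpleCoeff_pos_of_maximal hθ k)
      ((hdom k).lt_of_ne' (right_ne_zero_of_mul hk))⟩

lemma eq_of_maximal_simpleCoeff [P.IsReduced] [P.IsIrreducible]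
    (hθ : ∀ i, simpleCoeff b θ ≤ simpleCoeff b i → i = θ)
    (hθ' : ∀ i, simpleCoeff b θ' ≤ simpleCoeff b i → i = θ') : θ = θ' := by
  by_contra hne
  obtain ⟨i, hi⟩ := P.root_sub_root_mem_of_pairingIn_pos (pairingIn_pos_of_maximal hθ hθ') hne
  have hi' : P.rootSpanMem ℤ i = P.rootSpanMem ℤ θ - P.rootSpanMem ℤ θ' := Subtype.ext hi
  have hcoeff : simpleCoeff b i = simpleCoeff b θ - simpleCoeff b θ' := by
    simp only [simpleCoeff, hi', map_sub, Finsupp.coe_sub]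
  rcases simpleCoeff_nonneg_or_nonpos b i with h | h
  · exact hne (hθ' θ (sub_nonneg.1 (hcoeff ▸ h)))
  · exact hne (hθ θ' (sub_nonpos.1 (hcoeff ▸ h))).symm

lemma exists_highest_root [P.IsReduced] [P.IsIrreducible] [Nonempty ι] (b : P.Base) :
    ∃ θ, ∀ i, simpleCoeff b i ≤ simpleCoeff b θ := by
  have hmax (i : ι) : ∃ θ, simpleCoeff b i ≤ simpleCoeff b θ ∧
      ∀ j, simpleCoeff b θ ≤ simpleCoeff b j → j = θ := by
    obtain ⟨_, hle, ⟨θ, rfl⟩, hθ⟩ :=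
      (Set.finite_range (simpleCoeff b)).exists_le_maximal (Set.mem_range_self i)
    exact ⟨θ, hle, fun j hj ↦ simpleCoeff_injective b ((hθ (Set.mem_range_self j) hj).antisymm hj)⟩
  obtain ⟨θ, -, hθ⟩ := hmax (Classical.arbitrary ι)
  refine ⟨θ, fun i ↦ ?_⟩
  obtain ⟨θ', hle, hθ'⟩ := hmax i
  rwa [eq_of_maximal_simpleCoeff hθ hθ']

end HighestRoot

section ExtendedDynkinDiagram

variable {ι R M N : Type*} [CommRing R] [AddCommGroup M] [Module R M]
  [AddCommGroup N] [Module R N] {P : RootPairing ι R M N} [P.IsCrystallographic]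

section DynkinGraph

variable {V : Type*}

/-- The edge weights of the Dynkin diagram of a family of roots whose distinct members have
nonpositive Cartan integers. Truncation makes the weight of the pair `(x, x)` zero. -/
noncomputable def dynkinWeight (P : RootPairing ι R M N) [P.IsCrystallographic] (β : V → ι)
    (x y : V) : ℕ :=
  (-P.pairingIn ℤ (β y) (β x)).toNat

variable {β : V → ι}

lemma natCast_dynkinWeight (hβ : Pairwise fun x y ↦ P.pairingIn ℤ (β x) (β y) ≤ 0)
    {x y : V} (hxy : x ≠ y) : (dynkinWeight P β x y : ℤ) = -P.pairingIn ℤ (β y) (β x) :=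
  Int.toNat_of_nonneg (neg_nonneg.2 (hβ hxy.symm))

variable [CharZero R]

/-- The Dynkin diagram, without multiplicities, of a family of roots indexed by `β`. -/
def dynkinGraph [Finite ι] (P : RootPairing ι R M N) [P.IsCrystallographic] (β : V → ι) :
    SimpleGraph V where
  Adj x y := x ≠ y ∧ P.pairingIn ℤ (β x) (β y) ≠ 0
  symm := ⟨fun _ _ h ↦ ⟨h.1.symm, pairingIn_ne_zero_symm h.2⟩⟩
  loopless := ⟨fun _ h ↦ h.1 rfl⟩

lemma dynkinWeight_self (x : V) : dynkinWeight P β x x = 0 := by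
  simp [dynkinWeight]

lemma isAdditiveLabelling_dynkinWeight [Finite ι] [Fintype V]
    (hβ : Pairwise fun x y ↦ P.pairingIn ℤ (β x) (β y) ≤ 0) {a : V → ℕ}
    (h : ∑ x, a x • P.rootSpanMem ℤ (β x) = 0) :
    IsAdditiveLabelling (dynkinGraph P β) (dynkinWeight P β) a where
  weight_ne_zero_iff x y := by
    rcases eq_or_ne x y with rfl | hxy
    · simp [dynkinWeight_self]
    · rw [← Nat.cast_ne_zero (R := ℤ), natCast_dynkinWeight hβ hxy, neg_ne_zero,
        SimpleGraph.adj_comm]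
      exact (and_iff_right hxy.symm).symm
  two_mul_eq_sum x := by
    classical
    have hx : ∑ y, (a y : ℤ) * P.pairingIn ℤ (β y) (β x) = 0 := by
      simpa only [map_sum, map_nsmul, map_zero, P.coroot'In_rootSpanMem_eq_pairingIn,
        nsmul_eq_mul] using congrArg (P.coroot'In ℤ (β x)) h
    rw [← Finset.add_sum_erase _ _ (Finset.mem_univ x), P.pairingIn_same] at hx
    rw [← Finset.add_sum_erase _ _ (Finset.mem_univ x), dynkinWeight_self]
    have hsum : ∑ y ∈ Finset.univ.erase x, (dynkinWeight P β x y : ℤ) * a y =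
        -∑ y ∈ Finset.univ.erase x, (a y : ℤ) * P.pairingIn ℤ (β y) (β x) := by
      rw [← Finset.sum_neg_distrib]
      refine Finset.sum_congr rfl fun y hy ↦ ?_
      rw [natCast_dynkinWeight hβ (Finset.ne_of_mem_erase hy).symm]
      ring
    zify
    linarith

end DynkinGraph

variable [CharZero R] {b : P.Base} {θ : ι}

/-- The vertices of the extended Dynkin diagram: the simple roots together with the negative of
`P.root θ`, meant for `θ` the highest root. -/
def extendedBase (b : P.Base) (θ : ι) : Option b.support → ι
  | none => P.reflectionPerm θ θ
  | some k => k

variable [Finite ι] [IsDomain R]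

lemma pairwise_extendedBase_pairingIn_nonpos (hθ : ∀ i, simpleCoeff b i ≤ simpleCoeff b θ) :
    Pairwise fun x y ↦ P.pairingIn ℤ (extendedBase b θ x) (extendedBase b θ y) ≤ 0 := by
  have hdom (k : b.support) := pairingIn_nonneg_of_maximal (eq_highest_of_le hθ) k
  rintro (_ | k) (_ | l) hne
  · exact absurd rfl hne
  · simpa [extendedBase] using hdom l
  · simpa [extendedBase] using pairingIn_nonneg_symm (hdom k)
  · exact pairingIn_simple_le_zero (ne_of_apply_ne some hne)

variable [P.IsReduced] [P.IsIrreducible]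

lemma connected_dynkinGraph_extendedBase (b : P.Base) (θ : ι) :
    (dynkinGraph P (extendedBase b θ)).Connected := by
  obtain ⟨l, -, hl⟩ : ∃ l ∈ Finset.univ, simpleCoeff b θ l * P.pairingIn ℤ l θ ≠ 0 :=
    Finset.exists_ne_zero_of_sum_ne_zero (by
      rw [← pairingIn_eq_sum_simpleCoeff, P.pairingIn_same]; norm_num)
  have hnone : (dynkinGraph P (extendedBase b θ)).Adj (some l) none :=
    ⟨by simp, by simpa [extendedBase] using right_ne_zero_of_mul hl⟩
  have hsome (k : b.support) : (dynkinGraph P (extendedBase b θ)).Reachable none (some k) := by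
    refine b.induction_on_cartanMatrix
      (fun k ↦ (dynkinGraph P (extendedBase b θ)).Reachable none (some k))
      hnone.symm.reachable fun i j hi hij ↦ ?_
    rcases eq_or_ne i j with rfl | hne
    · exact hi
    · have hji : (dynkinGraph P (extendedBase b θ)).Adj (some j) (some i) :=
        ⟨by simpa using hne.symm, hij⟩
      exact hi.trans hji.symm.reachable
  refine SimpleGraph.connected_iff_exists_forall_reachable _ |>.2 ⟨none, ?_⟩
  rintro (_ | k)
  exacts [.rfl, hsome k]

lemma simpleCoeff_highest_le_six (hθ : ∀ i, simpleCoeff b i ≤ simpleCoeff b θ) (k : b.support) :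
    simpleCoeff b θ k ≤ 6 := by
  have hnonneg := simpleCoeff_nonneg_of_maximal (eq_highest_of_le hθ)
  let a : Option b.support → ℕ := fun x ↦ x.elim 1 fun k ↦ (simpleCoeff b θ k).toNat
  have hsum : ∑ x, a x • P.rootSpanMem ℤ (extendedBase b θ x) = 0 := by
    have hsmul (k : b.support) (x : P.rootSpan ℤ) :
        (simpleCoeff b θ k).toNat • x = simpleCoeff b θ k • x := by
      rw [← natCast_zsmul, Int.toNat_of_nonneg (hnonneg k)]
    simp only [Fintype.sum_option, a, Option.elim, extendedBase, hsmul, one_smul,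
      sum_simpleCoeff_smul_rootSpanMem, P.rootSpanMem_reflectionPerm_self, neg_add_cancel]
  have ha := isAdditiveLabelling_dynkinWeight (pairwise_extendedBase_pairingIn_nonpos hθ) hsum
  have := ha.le_six (connected_dynkinGraph_extendedBase b θ) (o := none) rfl (some k)
  exact Int.toNat_le.1 this

end ExtendedDynkinDiagram

section Alcove

lemma exists_sum_sq_add_intCast_minimal {ι K : Type*} [Fintype ι] [Field K] [LinearOrder K]
    [IsStrictOrderedRing K] [FloorRing K] (q : ι → K) {T : Set (ι → ℤ)} (hT : T.Nonempty) :
    ∃ z ∈ T, ∀ z' ∈ T, ∑ i, (q i + z i) ^ 2 ≤ ∑ i, (q i + z' i) ^ 2 := by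
  obtain ⟨z₀, hz₀⟩ := hT
  set C := ∑ i, (q i + z₀ i) ^ 2
  have hfinite : {z ∈ T | ∑ i, (q i + z i) ^ 2 ≤ C}.Finite := by
    refine (Set.Finite.pi fun i ↦ Set.finite_Icc ⌊-(C + 1) - q i⌋ ⌈C + 1 - q i⌉).subset ?_
    rintro z ⟨-, hz⟩ i -
    have hi : (q i + z i) ^ 2 ≤ C :=
      (Finset.single_le_sum (f := fun i ↦ (q i + z i) ^ 2) (fun _ _ ↦ sq_nonneg _)
        (Finset.mem_univ i)).trans hz
    have hC : 0 ≤ C := (sq_nonneg _).trans hi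
    obtain ⟨hlower, hupper⟩ := abs_le_of_sq_le_sq' (a := q i + z i) (b := C + 1)
      (by nlinarith) (by linarith)
    exact ⟨Int.cast_le.1 ((Int.floor_le _).trans (by linarith)),
      Int.cast_le.1 (le_trans (by linarith) (Int.le_ceil (C + 1 - q i)))⟩
  obtain ⟨z, ⟨hzT, hzC⟩, hz⟩ := hfinite.exists_minimalFor (fun z ↦ ∑ i, (q i + z i) ^ 2) _
    ⟨z₀, hz₀, le_rfl⟩
  refine ⟨z, hzT, fun z' hz' ↦ ?_⟩
  by_contra! hlt
  exact (hz ⟨hz', hlt.le.trans hzC⟩ hlt.le).not_gt hlt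

variable {ι R M N : Type*} [CommRing R] [CharZero R] [AddCommGroup M] [Module R M]
  [AddCommGroup N] [Module R N] {P : RootPairing ι R M N} [P.IsCrystallographic]

lemma two_mul_sum_pairingIn_mul [Fintype ι] {K : Type*} [CommRing K]
    (g : P.rootSpan ℤ →ₗ[ℤ] K) (i : ι) :
    2 * ∑ j, (P.pairingIn ℤ j i : K) * g (P.rootSpanMem ℤ j) =
      (∑ j, (P.pairingIn ℤ j i : K) ^ 2) * g (P.rootSpanMem ℤ i) := by
  have h : ∑ j, (P.pairingIn ℤ j i : K) * g (P.rootSpanMem ℤ j) =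
      ∑ j, -(P.pairingIn ℤ j i : K) *
        (g (P.rootSpanMem ℤ j) - P.pairingIn ℤ j i * g (P.rootSpanMem ℤ i)) := by
    rw [← Equiv.sum_comp (P.reflectionPerm i)]
    simp only [rootSpanMem_reflectionPerm, map_sub, map_zsmul, zsmul_eq_mul,
      ← P.pairingIn_reflectionPerm, P.pairingIn_reflectionPerm_self_right, Int.cast_neg]
  rw [two_mul]
  nth_rewrite 2 [h]
  rw [Finset.sum_mul, ← Finset.sum_add_distrib]
  exact Finset.sum_congr rfl fun j _ ↦ by ring

lemma exists_int_translate_le_one [Finite ι] {K : Type*} [Field K] [LinearOrder K]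
    [IsStrictOrderedRing K] [FloorRing K] (g : P.rootSpan ℤ →ₗ[ℤ] K) :
    ∃ d : P.rootSpan ℤ →ₗ[ℤ] ℤ, ∀ i, g (P.rootSpanMem ℤ i) + d (P.rootSpanMem ℤ i) ≤ 1 := by
  have := Fintype.ofFinite ι
  obtain ⟨_, ⟨d, rfl⟩, hd⟩ := exists_sum_sq_add_intCast_minimal (fun i ↦ g (P.rootSpanMem ℤ i))
    (Set.range_nonempty fun (d : P.rootSpan ℤ →ₗ[ℤ] ℤ) i ↦ d (P.rootSpanMem ℤ i))
  refine ⟨d, fun i ↦ ?_⟩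
  have hsum := two_mul_sum_pairingIn_mul (g + (Int.castAddHom K).toIntLinearMap ∘ₗ d) i
  have hmin := hd _ ⟨d - P.coroot'In ℤ i, rfl⟩
  simp only [LinearMap.sub_apply, LinearMap.add_apply, LinearMap.comp_apply,
    P.coroot'In_rootSpanMem_eq_pairingIn, AddMonoidHom.coe_toIntLinearMap, Int.coe_castAddHom,
    Int.cast_sub] at hmin hsum
  set f : ι → K := fun j ↦ g (P.rootSpanMem ℤ j) + d (P.rootSpanMem ℤ j)
  set p : ι → K := fun j ↦ P.pairingIn ℤ j i
  have hexpand : ∑ j, (g (P.rootSpanMem ℤ j) + (d (P.rootSpanMem ℤ j) - p j)) ^ 2 =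
      ∑ j, f j ^ 2 - 2 * ∑ j, p j * f j + ∑ j, p j ^ 2 := by
    simp only [Finset.mul_sum, ← Finset.sum_sub_distrib, ← Finset.sum_add_distrib, f]
    exact Finset.sum_congr rfl fun j _ ↦ by ring
  have hpos : 0 < ∑ j, p j ^ 2 :=
    Finset.sum_pos' (fun j _ ↦ sq_nonneg _) ⟨i, Finset.mem_univ i, by simp [p]⟩
  have hle : (∑ j, p j ^ 2) * f i ≤ (∑ j, p j ^ 2) * 1 := by linarith
  exact le_of_mul_le_mul_left hle hpos

end Alcove

section AdaptedBase

lemma exists_nat_forall_abs_lt_mul_abs {ι K : Type*} [Finite ι] [Field K] [LinearOrder K]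
    [IsStrictOrderedRing K] [Archimedean K] (g h : ι → K) :
    ∃ n : ℕ, ∀ i, g i ≠ 0 → |h i| < n * |g i| := by
  refine (Filter.eventually_all (l := Filter.atTop).2 fun i ↦ ?_).exists
  by_cases hi : g i = 0
  · exact .of_forall fun _ h ↦ (h hi).elim
  · filter_upwards [tendsto_natCast_atTop_atTop.eventually_gt_atTop (|h i| / |g i|)]
      with n hn _
    exact (div_lt_iff₀ (abs_pos.2 hi)).1 hn

variable {ι K M N : Type*} [Finite ι] [Field K] [CharZero K] [AddCommGroup M] [Module K M]
  [AddCommGroup N] [Module K N] {P : RootPairing ι K M N} [P.IsRootSystem] [P.IsCrystallographic]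
  [P.IsReduced]

open RootPairing IsAddIndecomposable in
lemma exists_base_map_root_pos (f : M →+ ℚ) (hf : ∀ i, f (P.root i) ≠ 0) :
    ∃ b : P.Base, ∀ i ∈ b.support, 0 < f (P.root i) := by
  let := P.indexNeg
  refine ⟨Base.mk' P (baseOf P.root f) (P.linearIndepOn_root_baseOf f hf)
    (fun i ↦ mem_or_neg_mem_closure_baseOf P.root f i (hf i) (by simp)), fun i hi ↦ ?_⟩
  have hmem : i ∈ baseOf P.root f := by simpa [Base.mk'] using hi
  exact hmem.1

lemma exists_base_map_root_nonneg (P : RootPairing ι K M N) [P.IsRootSystem] [P.IsCrystallographic]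
    [P.IsReduced] (g : M →+ ℚ) : ∃ b : P.Base, ∀ i ∈ b.support, 0 ≤ g (P.root i) := by
  let : Module ℚ M := Module.compHom M (algebraMap ℚ K)
  obtain ⟨h, hh⟩ : ∃ h : Module.Dual ℚ M, ∀ i, h (P.root i) ≠ 0 :=
    Module.exists_dual_forall_apply_ne_zero P.root fun i ↦ P.ne_zero i
  obtain ⟨n, hn⟩ := exists_nat_forall_abs_lt_mul_abs (fun i ↦ g (P.root i)) (fun i ↦ h (P.root i))
  have hf (i : ι) : (n • g + (h : M →+ ℚ)) (P.root i) = n * g (P.root i) + h (P.root i) := by simp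
  obtain ⟨b, hb⟩ := exists_base_map_root_pos (P := P) (n • g + (h : M →+ ℚ)) fun i hi ↦ by
    rw [hf] at hi
    by_cases hg : g (P.root i) = 0
    · exact hh i (by simpa [hg] using hi)
    · refine (hn i hg).ne ?_
      rw [← Nat.abs_cast n, ← abs_mul, eq_neg_of_add_eq_zero_right hi, abs_neg]
  refine ⟨b, fun i hi ↦ ?_⟩
  by_contra! hneg
  have hpos := hb i hi
  have hlt := hn i hneg.ne
  rw [hf] at hpos
  rw [abs_of_neg hneg] at hlt
  linarith [le_abs_self (h (P.root i))]

end AdaptedBase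

section Characters

lemma exists_toAddCircle_addOrderOf_eq {A : Type*} [AddCommGroup A] {a : A}
    (ha : IsOfFinAddOrder a) :
    ∃ χ : A →ₗ[ℤ] AddCircle (1 : ℚ), addOrderOf (χ a) = addOrderOf a := by
  set n := addOrderOf a
  set u : AddCircle (1 : ℚ) := ((1 / n : ℚ) : AddCircle (1 : ℚ))
  have hu : addOrderOf u = n := AddCircle.addOrderOf_period_div ha.addOrderOf_pos
  let f := Submodule.liftQSpanSingleton (n : ℤ) (LinearMap.toSpanSingleton ℤ _ u) (by
    rw [LinearMap.toSpanSingleton_apply, natCast_zsmul, ← hu, addOrderOf_nsmul_eq_zero])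
  obtain ⟨χ, hχ⟩ := (Module.Baer.of_divisible (AddCircle (1 : ℚ))).extension_property
    _ (Submodule.injective_subtype (Submodule.span ℤ {a}))
    (f ∘ₗ (CharacterModule.intSpanEquivQuotAddOrderOf a).toLinearMap)
  refine ⟨χ, ?_⟩
  have hχa : χ a = u := calc
    χ a = f (CharacterModule.intSpanEquivQuotAddOrderOf a
        ⟨a, Submodule.mem_span_singleton_self a⟩) :=
      LinearMap.congr_fun hχ ⟨a, Submodule.mem_span_singleton_self a⟩
    _ = f (Submodule.Quotient.mk 1) := by
      rw [CharacterModule.intSpanEquivQuotAddOrderOf_apply_self]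
    _ = u := one_smul ℤ u
  rw [hχa, hu]

end Characters

section FundamentalAlcove

variable {ι R M N K : Type*} [CommRing R] [CharZero R] [AddCommGroup M] [Module R M]
  [AddCommGroup N] [Module R N] {P : RootPairing ι R M N} {b : P.Base} {θ i j : ι} {k : b.support}

section Monotone

variable {A : Type*} [AddCommGroup A] [LinearOrder A] [IsOrderedAddMonoid A]
  {g : P.rootSpan ℤ →ₗ[ℤ] A}

lemma map_rootSpanMem_mono (hg : ∀ k : b.support, 0 ≤ g (P.rootSpanMem ℤ k))
    (hij : simpleCoeff b i ≤ simpleCoeff b j) :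
    g (P.rootSpanMem ℤ i) ≤ g (P.rootSpanMem ℤ j) := by
  rw [map_rootSpanMem_eq_sum b g i, map_rootSpanMem_eq_sum b g j]
  exact Finset.sum_le_sum fun k _ ↦ zsmul_le_zsmul_left (hg k) (hij k)

lemma simpleCoeff_eq_of_le_of_map_eq (hg : ∀ k : b.support, 0 ≤ g (P.rootSpanMem ℤ k))
    (hk : 0 < g (P.rootSpanMem ℤ k)) (hij : simpleCoeff b i ≤ simpleCoeff b j)
    (h : g (P.rootSpanMem ℤ i) = g (P.rootSpanMem ℤ j)) :
    simpleCoeff b i k = simpleCoeff b j k := by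
  rw [map_rootSpanMem_eq_sum b g i, map_rootSpanMem_eq_sum b g j,
    Finset.sum_eq_sum_iff_of_le fun k _ ↦ zsmul_le_zsmul_left (hg k) (hij k)] at h
  exact (zsmul_left_strictMono hk).injective (h k (Finset.mem_univ k))

lemma simpleCoeff_eq_zero_of_map_eq_zero (hg : ∀ k : b.support, 0 ≤ g (P.rootSpanMem ℤ k))
    (hk : 0 < g (P.rootSpanMem ℤ k)) (hi : g (P.rootSpanMem ℤ i) = 0) :
    simpleCoeff b i k = 0 := by
  have hrefl := simpleCoeff_reflectionPerm_self b i
  have hmap : g (P.rootSpanMem ℤ (P.reflectionPerm i i)) = g (P.rootSpanMem ℤ i) := by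
    rw [P.rootSpanMem_reflectionPerm_self, map_neg, hi, neg_zero]
  refine self_eq_neg.1 ?_
  rw [← Pi.neg_apply, ← hrefl]
  rcases simpleCoeff_nonneg_or_nonpos b i with h | h
  · exact (simpleCoeff_eq_of_le_of_map_eq hg hk (hrefl ▸ neg_le_self h) hmap).symm
  · exact simpleCoeff_eq_of_le_of_map_eq hg hk (hrefl ▸ h.trans (neg_nonneg.2 h)) hmap.symm

end Monotone

variable [Ring K] [LinearOrder K] [IsStrictOrderedRing K] {g : P.rootSpan ℤ →ₗ[ℤ] K}

-- Since `g ≤ 1` on roots and their negatives, the integer `m` is `-1`, `0` or `1`.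
lemma simpleCoeff_eq_highest_mul (hθ : ∀ i, simpleCoeff b i ≤ simpleCoeff b θ)
    (hg : ∀ k : b.support, 0 ≤ g (P.rootSpanMem ℤ k)) (hg1 : ∀ i, g (P.rootSpanMem ℤ i) ≤ 1)
    (hk : 0 < g (P.rootSpanMem ℤ k)) {m : ℤ} (hi : g (P.rootSpanMem ℤ i) = m) :
    simpleCoeff b i k = simpleCoeff b θ k * m := by
  have hone {i : ι} (hi : g (P.rootSpanMem ℤ i) = 1) : simpleCoeff b i k = simpleCoeff b θ k :=
    simpleCoeff_eq_of_le_of_map_eq hg hk (hθ i)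
      ((map_rootSpanMem_mono hg (hθ i)).antisymm (hi ▸ hg1 θ))
  have hneg : g (P.rootSpanMem ℤ (P.reflectionPerm i i)) = (-m : ℤ) := by
    rw [P.rootSpanMem_reflectionPerm_self, map_neg, hi, Int.cast_neg]
  have hle : m ≤ 1 := by exact_mod_cast hi ▸ hg1 i
  have hge : -m ≤ 1 := by exact_mod_cast hneg ▸ hg1 (P.reflectionPerm i i)
  obtain rfl | rfl | rfl : m = -1 ∨ m = 0 ∨ m = 1 := by lia
  · have hrefl := hone (by simpa using hneg)
    rw [simpleCoeff_reflectionPerm_self, Pi.neg_apply] at hrefl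
    lia
  · rw [simpleCoeff_eq_zero_of_map_eq_zero hg hk (by simpa using hi), mul_zero]
  · rw [hone (by simpa using hi), mul_one]

lemma coord_eq_highest_mul (hθ : ∀ i, simpleCoeff b i ≤ simpleCoeff b θ)
    (hg : ∀ k : b.support, 0 ≤ g (P.rootSpanMem ℤ k)) (hg1 : ∀ i, g (P.rootSpanMem ℤ i) ≤ 1)
    (hk : 0 < g (P.rootSpanMem ℤ k)) {I : Set ι} (hI : ∀ i ∈ I, ∃ m : ℤ, g (P.rootSpanMem ℤ i) = m)
    {y : P.rootSpan ℤ} {n : ℕ} (hn : n ≠ 0)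
    (hy : n • y ∈ Submodule.span ℤ (P.rootSpanMem ℤ '' I)) :
    (b.toWeightBasisInt.coord k y : K) = simpleCoeff b θ k * g y := by
  have heq : Set.EqOn ((Int.castAddHom K).toIntLinearMap ∘ₗ b.toWeightBasisInt.coord k)
      ⇑(simpleCoeff b θ k • g) (P.rootSpanMem ℤ '' I) := by
    rintro _ ⟨i, hi, rfl⟩
    obtain ⟨m, hm⟩ := hI i hi
    have h : simpleCoeff b i k = simpleCoeff b θ k * m := simpleCoeff_eq_highest_mul hθ hg hg1 hk hm
    rw [LinearMap.smul_apply, hm, zsmul_eq_mul, ← Int.cast_mul, ← h]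
    rfl
  have h := LinearMap.eqOn_span heq hy
  rw [map_nsmul, map_nsmul] at h
  simpa [hn] using h

end FundamentalAlcove

section TorsionOrder

lemma mem_span_rootSpanMem_image {ι R M N : Type*} [CommRing R] [AddCommGroup M] [Module R M]
    [AddCommGroup N] [Module R N] {P : RootPairing ι R M N} {S : Set M} (hS : S ⊆ Set.range P.root)
    {y : P.rootSpan ℤ} (hy : (y : M) ∈ AddSubgroup.closure S) :
    y ∈ Submodule.span ℤ (P.rootSpanMem ℤ '' (P.root ⁻¹' S)) := by
  have hS' : (P.rootSpan ℤ).subtype '' (P.rootSpanMem ℤ '' (P.root ⁻¹' S)) = S := by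
    rw [Set.image_image]
    exact Set.image_preimage_eq_of_subset hS
  have hmap : (P.rootSpan ℤ).subtype y ∈
      (Submodule.span ℤ (P.rootSpanMem ℤ '' (P.root ⁻¹' S))).map (P.rootSpan ℤ).subtype := by
    rw [Submodule.map_span, hS']
    exact (Submodule.span_int_eq_addSubgroupClosure S).ge hy
  exact (Function.Injective.mem_set_image (P.rootSpan ℤ).injective_subtype).1 hmap

variable {ι K M N : Type*} [Finite ι] [Field K] [CharZero K] [AddCommGroup M] [Module K M]
  [AddCommGroup N] [Module K N]

lemma exists_lift_le_one (P : RootPairing ι K M N) [P.IsCrystallographic]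
    (ψ : P.rootSpan ℤ →ₗ[ℤ] AddCircle (1 : ℚ)) :
    ∃ g : P.rootSpan ℤ →ₗ[ℤ] ℚ, (∀ y, (g y : AddCircle (1 : ℚ)) = ψ y) ∧
      ∀ i, g (P.rootSpanMem ℤ i) ≤ 1 := by
  have : Module.IsTorsionFree ℤ M := .trans K
  obtain ⟨g, hg⟩ := Module.projective_lifting_property
    (QuotientAddGroup.mk' (AddSubgroup.zmultiples (1 : ℚ))).toIntLinearMap ψ
    (QuotientAddGroup.mk'_surjective _)
  obtain ⟨d, hd⟩ := exists_int_translate_le_one g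
  refine ⟨g + (Int.castAddHom ℚ).toIntLinearMap ∘ₗ d, fun y ↦ ?_, hd⟩
  have hd0 : ((d y : ℚ) : AddCircle (1 : ℚ)) = 0 := (AddCircle.coe_eq_zero_iff 1).2 ⟨d y, by simp⟩
  calc ((g y + d y : ℚ) : AddCircle (1 : ℚ)) = (g y : AddCircle (1 : ℚ)) := by
        rw [AddCircle.coe_add, hd0, add_zero]
    _ = ψ y := LinearMap.congr_fun hg y

variable (P : RootPairing ι K M N) [P.IsRootSystem] [P.IsCrystallographic] [P.IsReduced]

lemma exists_base_map_rootSpanMem_nonneg (g : P.rootSpan ℤ →ₗ[ℤ] ℚ) :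
    ∃ b : P.Base, ∀ k : b.support, 0 ≤ g (P.rootSpanMem ℤ k) := by
  obtain ⟨f, hf⟩ := (Module.Baer.of_divisible ℚ).extension_property (P.rootSpan ℤ).subtype
    (Submodule.injective_subtype _) g
  obtain ⟨b, hb⟩ := exists_base_map_root_nonneg P f.toAddMonoidHom
  exact ⟨b, fun k ↦ (hb k k.2).trans_eq (LinearMap.congr_fun hf (P.rootSpanMem ℤ k))⟩

variable [P.IsIrreducible]

lemma addOrderOf_map_le_six (ψ : P.rootSpan ℤ →ₗ[ℤ] AddCircle (1 : ℚ)) {I : Set ι}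
    (hI : ∀ i ∈ I, ψ (P.rootSpanMem ℤ i) = 0) {y : P.rootSpan ℤ} {n : ℕ} (hn : n ≠ 0)
    (hy : n • y ∈ Submodule.span ℤ (P.rootSpanMem ℤ '' I)) : addOrderOf (ψ y) ≤ 6 := by
  obtain ⟨g, hψ, hg1⟩ := exists_lift_le_one P ψ
  obtain ⟨b, hg⟩ := exists_base_map_rootSpanMem_nonneg P g
  by_cases hzero : ∀ k : b.support, g (P.rootSpanMem ℤ k) = 0
  · have hg0 : g = 0 := b.toWeightBasisInt.ext fun k ↦ by
      rw [toWeightBasisInt_eq_rootSpanMem, hzero, LinearMap.zero_apply]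
    simp [← hψ, hg0]
  push Not at hzero
  obtain ⟨k, hk⟩ := hzero
  have : Nonempty ι := ⟨k⟩
  obtain ⟨θ, hθ⟩ := exists_highest_root b
  have hpos := simpleCoeff_pos_of_maximal (eq_highest_of_le hθ) k
  have hint (i : ι) (hi : i ∈ I) : ∃ m : ℤ, g (P.rootSpanMem ℤ i) = m := by
    obtain ⟨m, hm⟩ := (AddCircle.coe_eq_zero_iff 1).1 ((hψ _).trans (hI i hi))
    exact ⟨m, by simpa using hm.symm⟩
  have hcoord := coord_eq_highest_mul hθ hg hg1 ((hg k).lt_of_ne' hk) hint hn hy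
  have hsmul : (simpleCoeff b θ k).toNat • ψ y = 0 := by
    rw [← natCast_zsmul, Int.toNat_of_nonneg hpos.le, ← hψ, ← AddCircle.coe_zsmul, zsmul_eq_mul,
      ← hcoord]
    exact (AddCircle.coe_eq_zero_iff 1).2 ⟨b.toWeightBasisInt.coord k y, by simp⟩
  exact (addOrderOf_le_of_nsmul_eq_zero (Int.lt_toNat.2 hpos) hsmul).trans
    (Int.toNat_le.2 (simpleCoeff_highest_le_six hθ k))

theorem torsion_order_le_six_general {S : Set M} (hS : S ⊆ Set.range P.root) :
    ∀ x ∈ AddCommGroup.torsion (AddSubgroup.closure (Set.range P.root) ⧸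
      (AddSubgroup.closure S).addSubgroupOf (AddSubgroup.closure (Set.range P.root))),
    addOrderOf x ≤ 6 := by
  intro x hx
  obtain ⟨χ, hχ⟩ := exists_toAddCircle_addOrderOf_eq (a := x) hx
  obtain ⟨y, rfl⟩ := QuotientAddGroup.mk_surjective x
  rw [← hχ]
  let e : P.rootSpan ℤ ≃+ AddSubgroup.closure (Set.range P.root) :=
    AddEquiv.addSubgroupCongr (Submodule.span_int_eq_addSubgroupClosure _)
  let π := QuotientAddGroup.mk' ((AddSubgroup.closure S).addSubgroupOf
    (AddSubgroup.closure (Set.range P.root)))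
  have hπ (z : P.rootSpan ℤ) : π (e z) = 0 ↔ (z : M) ∈ AddSubgroup.closure S :=
    (QuotientAddGroup.eq_zero_iff _).trans AddSubgroup.mem_addSubgroupOf
  let ψ : P.rootSpan ℤ →ₗ[ℤ] AddCircle (1 : ℚ) := χ ∘ₗ (π.comp e.toAddMonoidHom).toIntLinearMap
  have hψ (i : ι) (hi : P.root i ∈ S) : ψ (P.rootSpanMem ℤ i) = 0 :=
    (congrArg χ ((hπ _).2 (AddSubgroup.subset_closure hi))).trans (map_zero χ)
  obtain ⟨z, rfl⟩ := e.surjective y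
  have hz : ((addOrderOf (π (e z)) • z : P.rootSpan ℤ) : M) ∈ AddSubgroup.closure S := by
    rw [← hπ, map_nsmul, map_nsmul, addOrderOf_nsmul_eq_zero]
  exact addOrderOf_map_le_six P ψ hψ (IsOfFinAddOrder.addOrderOf_pos hx).ne'
    (mem_span_rootSpanMem_image hS hz)

end TorsionOrder

section LieRoots

lemma lieRoots_eq_range_root (L : Type*) [LieRing L] [LieAlgebra ℂ L] [FiniteDimensional ℂ L]
    [LieAlgebra.IsKilling ℂ L] (H : LieSubalgebra ℂ L) [H.IsCartanSubalgebra] :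
    lieRoots L H = Set.range (LieAlgebra.IsKilling.rootSystem H).root := by
  ext α
  constructor
  · rintro ⟨hα, hspace⟩
    let w : LieModule.Weight ℂ H L := ⟨α, hspace⟩
    have hw : w ∈ H.root := by
      simp only [LieSubalgebra.root, Finset.mem_filter, Finset.mem_univ, true_and]
      exact fun hz ↦ hα (LinearMap.ext (congrFun hz))
    exact ⟨⟨w, hw⟩, LinearMap.ext fun _ ↦ rfl⟩
  · rintro ⟨⟨w, hw⟩, rfl⟩
    simp only [LieSubalgebra.root, Finset.mem_filter, Finset.mem_univ, true_and] at hw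
    exact ⟨fun hz ↦ hw (funext (LinearMap.congr_fun hz)), w.genWeightSpace_ne_bot⟩

end LieRoots

/-- If `𝔤` is simple, every element of `Tor(Γ_𝔨)` has order at most `6`. -/
theorem torsion_order_le_six
    (L : Type*) [LieRing L] [LieAlgebra ℂ L] [FiniteDimensional ℂ L]
    [LieAlgebra.IsSimple ℂ L]
    (H : LieSubalgebra ℂ L) [H.IsCartanSubalgebra]
    (P : Set (Module.Dual ℂ H))
    (hP : IsClosedSymmetricSubsystem (lieRoots L H) P) :
    ∀ x ∈ AddCommGroup.torsion (GammaK L H P), addOrderOf x ≤ 6 := by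
  unfold GammaK
  rw [lieRoots_eq_range_root] at hP ⊢
  exact torsion_order_le_six_general _ hP.1
end

section
/- Suppose 𝔤 is a classical simple complex Lie algebra, i.e. 𝔤 = sl(n,ℂ) with n ≥ 2, 𝔤 = so(n,ℂ) with n ≥ 5, or 𝔤 = sp(2n,ℂ) with n ≥ 1. Then Tor(Γ_𝔨) is an elementary abelian 2-group, i.e. every element x of Tor(Γ_𝔨) satisfies x + x = 0 (so Tor(Γ_𝔨) is isomorphic to a direct sum of copies of ℤ/2ℤ). -/
open LieAlgebra

/-!
Let `V` be the standard representation and `w_i` its weights. Since `V` is faithful, every root is a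
difference of weights, so `x ∈ ℤΩ` can be written as `x = ∑ c_i w_i` with `∑ c_i = 0`. Suppose that
`m x ∈ ℤP` with `m ≠ 0`. An additive functional `F` on the dual of `H` such that `F (w_i)` depends
only on the class of `w_i` modulo `ℤP` vanishes on `ℤP`, and hence on `x`. Such functionals are
supplied by evaluation at elements of `H`: an endomorphism of `V` acting by a scalar on each weight
space and coming from `L` commutes with `H`, so it comes from an element of `H`.

For `sl(V)` every function of `i` is of the form `F (w_i)` up to an additive constant. The indicator
function of a class modulo `ℤP` then shows that the `c_i` sum to zero over each class, so that
`x ∈ ℤP`. If `L` consists of the skew-adjoint endomorphisms of a nondegenerate bilinear form, the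
weights come in pairs `w_{-i} = -w_i` and exactly the odd functions of `i` are available.
Antisymmetrising the indicator functions shows that the sums of `c_i - c_{-i}` over each class
vanish, so that `2x = ∑ (c_i - c_{-i}) w_i ∈ ℤP`.
-/

open LieModule
open scoped Pointwise TensorProduct

lemma exists_nsmul_mem_of_mem_torsion {D : Type*} [AddCommGroup D] {A B : AddSubgroup D}
    {x : B ⧸ A.addSubgroupOf B} (hx : x ∈ AddCommGroup.torsion (B ⧸ A.addSubgroupOf B)) :
    ∃ y : B, (y : B ⧸ A.addSubgroupOf B) = x ∧ ∃ m : ℕ, m ≠ 0 ∧ m • (y : D) ∈ A := by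
  obtain ⟨y, rfl⟩ := QuotientAddGroup.mk_surjective x
  obtain ⟨m, hm, hmy⟩ := isOfFinAddOrder_iff_nsmul_eq_zero.1 hx
  rw [← QuotientAddGroup.mk_nsmul, QuotientAddGroup.eq_zero_iff, AddSubgroup.mem_addSubgroupOf]
    at hmy
  exact ⟨y, rfl, m, hm.ne', hmy⟩

lemma exists_trace_sub_smul_one_eq_zero {K V : Type*} [Field K] [CharZero K] [AddCommGroup V]
    [Module K V] [FiniteDimensional K V] (T : Module.End K V) :
    ∃ t : K, LinearMap.trace K V (T - t • 1) = 0 := by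
  rcases subsingleton_or_nontrivial V with hV | hV
  · exact ⟨0, by rw [Subsingleton.elim (T - _) 0, map_zero]⟩
  · have hfinrank : (Module.finrank K V : K) ≠ 0 := Nat.cast_ne_zero.2 Module.finrank_pos.ne'
    exact ⟨LinearMap.trace K V T / Module.finrank K V, by simp [hfinrank]⟩

lemma isFaithful_compLieHom {R L L' M : Type*} [CommRing R] [LieRing L] [LieAlgebra R L]
    [LieRing L'] [LieAlgebra R L'] [AddCommGroup M] [Module R M] [LieRingModule L M]
    [LieModule R L M] [IsFaithful R L M] {φ : L' →ₗ⁅R⁆ L} (hφ : Function.Injective φ) :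
    letI := LieRingModule.compLieHom M φ
    letI := LieModule.compLieHom M φ
    IsFaithful R L' M := by
  let := LieRingModule.compLieHom M φ
  let := LieModule.compLieHom M φ
  refine (isFaithful_iff' R L' M).2 fun x hx ↦ (map_eq_zero_iff φ hφ).1 ?_
  exact (isFaithful_iff' R L M).1 inferInstance _ hx

section WeightLattice

variable {ι D K : Type*} [AddCommGroup D] [Field K] [CharZero K]
  {w : ι → D} {Ω P : Set D} {x : D} {m : ℕ}

lemma map_eq_zero_of_nsmul_mem_closure (hP : P ⊆ Set.range w - Set.range w) {F : D →+ K}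
    (hF : ∀ i j, (w i : D ⧸ AddSubgroup.closure P) = w j → F (w i) = F (w j))
    (hm : m ≠ 0) (hx : m • x ∈ AddSubgroup.closure P) : F x = 0 := by
  have closure_le_ker : AddSubgroup.closure P ≤ F.ker := by
    rw [AddSubgroup.closure_le]
    intro p hp
    obtain ⟨_, ⟨i, rfl⟩, _, ⟨j, rfl⟩, rfl⟩ := hP hp
    have h := hF i j ((QuotientAddGroup.eq_iff_sub_mem).2 (AddSubgroup.subset_closure hp))
    simpa [sub_eq_zero] using h
  have h : m • F x = 0 := by rw [← map_nsmul]; exact closure_le_ker hx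
  exact (smul_eq_zero.1 h).resolve_left hm

lemma sum_zsmul_eq_zero_of_sum_fiber_eq_zero [Fintype ι] [DecidableEq D] {a : ι → D} {c : ι → ℤ}
    (hc : ∀ d, ∑ i with a i = d, c i = 0) : ∑ i, c i • a i = 0 := by
  rw [← Finset.sum_fiberwise_of_maps_to fun i _ ↦ Finset.mem_image_of_mem a (Finset.mem_univ i)]
  refine Finset.sum_eq_zero fun d _ ↦ ?_
  calc ∑ i with a i = d, c i • a i = ∑ i with a i = d, c i • d :=
        Finset.sum_congr rfl fun i hi ↦ by rw [(Finset.mem_filter.1 hi).2]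
    _ = 0 := by rw [← Finset.sum_smul, hc, zero_smul]

lemma exists_sum_zsmul_eq_of_mem_closure [Fintype ι] (hΩ : Ω ⊆ Set.range w - Set.range w)
    (hx : x ∈ AddSubgroup.closure Ω) : ∃ c : ι → ℤ, ∑ i, c i = 0 ∧ ∑ i, c i • w i = x := by
  classical
  induction hx using AddSubgroup.closure_induction with
  | mem x hx =>
    obtain ⟨_, ⟨i, rfl⟩, _, ⟨j, rfl⟩, rfl⟩ := hΩ hx
    exact ⟨Pi.single i 1 - Pi.single j 1, by simp, by simp [sub_smul, Pi.single_apply]⟩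
  | zero => exact ⟨0, by simp, by simp⟩
  | add x y _ _ hx hy =>
    obtain ⟨⟨c, hc, rfl⟩, d, hd, rfl⟩ := And.intro hx hy
    exact ⟨c + d, by simp [Finset.sum_add_distrib, hc, hd],
      by simp [add_smul, Finset.sum_add_distrib]⟩
  | neg x _ hx =>
    obtain ⟨c, hc, rfl⟩ := hx
    exact ⟨-c, by simp [hc], by simp⟩

lemma mem_closure_of_nsmul_mem_closure [Finite ι] (hΩ : Ω ⊆ Set.range w - Set.range w)
    (hP : P ⊆ Ω)
    (hw : ∀ f : ι → K, ∃ (F : D →+ K) (t : K), ∀ i, F (w i) = f i - t)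
    (hx : x ∈ AddSubgroup.closure Ω) (hm : m ≠ 0) (hmx : m • x ∈ AddSubgroup.closure P) :
    x ∈ AddSubgroup.closure P := by
  classical
  cases nonempty_fintype ι
  let a (i : ι) : D ⧸ AddSubgroup.closure P := w i
  obtain ⟨c, hc, rfl⟩ := exists_sum_zsmul_eq_of_mem_closure hΩ hx
  rw [← QuotientAddGroup.eq_zero_iff, QuotientAddGroup.mk_sum]
  refine sum_zsmul_eq_zero_of_sum_fiber_eq_zero (a := a) fun s ↦ ?_
  obtain ⟨F, t, hF⟩ := hw fun i ↦ if a i = s then 1 else 0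
  have hFx : F (∑ i, c i • w i) = 0 := map_eq_zero_of_nsmul_mem_closure (hP.trans hΩ)
    (fun i j hij ↦ by simp only [hF, show a i = a j from hij]) hm hmx
  have hsum : F (∑ i, c i • w i) = ∑ i with a i = s, (c i : K) := by
    simp [hF, mul_sub, ← Finset.sum_mul, ← Int.cast_sum, hc, ← Finset.sum_filter]
  exact_mod_cast hsum.symm.trans hFx

lemma sum_zsmul_add_self [Fintype ι] {ν : ι → ι} (hν : ν.Involutive)
    (hw : ∀ i, w (ν i) = -w i) (c : ι → ℤ) :
    ∑ i, c i • w i + ∑ i, c i • w i = ∑ i, (c i - c (ν i)) • w i := by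
  have h : ∑ i, c i • w i = -∑ i, c (ν i) • w i := by
    rw [← Equiv.sum_comp hν.toPerm]
    simp [hw]
  nth_rw 2 [h]
  rw [← sub_eq_add_neg, ← Finset.sum_sub_distrib]
  exact Finset.sum_congr rfl fun i _ ↦ (sub_smul _ _ _).symm

lemma add_self_mem_closure_of_nsmul_mem_closure [Finite ι] (hΩ : Ω ⊆ Set.range w - Set.range w)
    (hP : P ⊆ Ω) {ν : ι → ι} (hν : ν.Involutive) (hwν : ∀ i, w (ν i) = -w i)
    (hw : ∀ f : ι → K, (∀ i, f (ν i) = -f i) → ∃ F : D →+ K, ∀ i, F (w i) = f i)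
    (hx : x ∈ AddSubgroup.closure Ω) (hm : m ≠ 0) (hmx : m • x ∈ AddSubgroup.closure P) :
    x + x ∈ AddSubgroup.closure P := by
  classical
  cases nonempty_fintype ι
  let a (i : ι) : D ⧸ AddSubgroup.closure P := w i
  have haν (i : ι) : a (ν i) = -a i := by simp [a, hwν]
  obtain ⟨c, -, rfl⟩ := exists_sum_zsmul_eq_of_mem_closure hΩ hx
  rw [sum_zsmul_add_self hν hwν, ← QuotientAddGroup.eq_zero_iff, QuotientAddGroup.mk_sum]
  refine sum_zsmul_eq_zero_of_sum_fiber_eq_zero (a := a) fun s ↦ ?_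
  let δ (i : ι) : K := if a i = s then 1 else 0
  obtain ⟨F, hF⟩ := hw (fun i ↦ δ i - δ (ν i)) fun i ↦ by simp [hν i]
  have hFx : F (∑ i, c i • w i) = 0 := map_eq_zero_of_nsmul_mem_closure (hP.trans hΩ)
    (fun i j hij ↦ by simp only [hF, δ, haν, show a i = a j from hij]) hm hmx
  have hswap : ∑ i, c i * δ (ν i) = ∑ i, c (ν i) * δ i := by
    rw [← Equiv.sum_comp hν.toPerm]
    simp [hν _]
  have hsum : F (∑ i, c i • w i) = ∑ i with a i = s, ((c i : K) - c (ν i)) :=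
    calc F (∑ i, c i • w i) = ∑ i, c i * δ i - ∑ i, c i * δ (ν i) := by simp [hF, mul_sub]
      _ = ∑ i, (c i - c (ν i)) * δ i := by rw [hswap]; simp [sub_mul]
      _ = ∑ i with a i = s, ((c i : K) - c (ν i)) := by
        simp only [δ, mul_ite, mul_one, mul_zero, Finset.sum_filter]
  exact_mod_cast hsum.symm.trans hFx

end WeightLattice

section WeightSpaces

variable {K N V : Type*} [Field K] [LieRing N] [LieAlgebra K N] [LieRing.IsNilpotent N]
  [AddCommGroup V] [Module K V] [LieRingModule N V] [LieModule K N V]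

lemma eq_of_apply_eq_smul_of_mem_maxGenEigenspace {f : Module.End K V} {a c : K} {v : V}
    (hv0 : v ≠ 0) (hv : v ∈ f.maxGenEigenspace a) (hfv : f v = c • v) : a = c := by
  by_contra hne
  exact hv0 (Submodule.disjoint_def.1 (f.disjoint_genEigenspace hne ⊤ 1) v hv
    (Module.End.mem_eigenspace_iff.2 hfv))

lemma apply_eq_zero_of_mem_genWeightSpace {B : LinearMap.BilinForm K V}
    (hB : ∀ (x : N) v w, B ⁅x, v⁆ w = -B v ⁅x, w⁆) {χ ψ : N → K} {x : N} (hx : χ x + ψ x ≠ 0)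
    {v w : V} (hv : v ∈ genWeightSpace V χ) (hw : w ∈ genWeightSpace V ψ) : B v w = 0 := by
  -- `B` is a morphism from `V ⊗ V` to the trivial module, on which `x` has only the eigenvalue `0`.
  let κ := TrivialLieModule.equiv K N K
  let β : V ⊗[K] V →ₗ⁅K, N⁆ TrivialLieModule K N K :=
    TensorProduct.LieModule.liftLie K N V V _
      { B.compr₂ κ.symm.toLinearMap with
        map_lie' := by intro x v; ext w; simp [hB, trivial_lie_zero] }
  have hβ : β (v ⊗ₜ w) ∈ (toEnd K N (TrivialLieModule K N K) x).maxGenEigenspace (χ x + ψ x) :=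
    LieModule.weight_vector_multiplication V V _ β (χ x) (ψ x) x
      ⟨⟨v, genWeightSpace_le_genWeightSpaceOf V x χ hv⟩ ⊗ₜ
        ⟨w, genWeightSpace_le_genWeightSpaceOf V x ψ hw⟩, rfl⟩
  by_contra hvw
  have hβ0 : β (v ⊗ₜ w) ≠ 0 := κ.symm.map_ne_zero_iff.2 hvw
  exact hx (eq_of_apply_eq_smul_of_mem_maxGenEigenspace hβ0 hβ
    (by rw [zero_smul, toEnd_apply_apply, trivial_lie_zero]))

variable [FiniteDimensional K V] [IsTriangularizable K N V]

variable (K N V) in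
lemma isInternal_genWeightSpace [DecidableEq (Weight K N V)] :
    DirectSum.IsInternal fun μ : Weight K N V ↦ (genWeightSpace V μ).toSubmodule :=
  DirectSum.isInternal_submodule_of_iSupIndep_of_iSup_eq_top
    (LieSubmodule.iSupIndep_toSubmodule.2 (iSupIndep_genWeightSpace' K N V))
    (LieSubmodule.iSup_toSubmodule_eq_top.2 (iSup_genWeightSpace_eq_top' K N V))

lemma linearMap_ext_genWeightSpace {W : Type*} [AddCommGroup W] [Module K W] {f g : V →ₗ[K] W}
    (h : ∀ μ : Weight K N V, ∀ v ∈ genWeightSpace V μ, f v = g v) : f = g := by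
  classical
  refine LinearMap.eqLocus_eq_top.1 (top_le_iff.1 ?_)
  rw [← (isInternal_genWeightSpace K N V).submodule_iSup_eq_top]
  exact iSup_le h

lemma exists_end_eq_smul_on_genWeightSpace (c : Weight K N V → K) :
    ∃ T : Module.End K V, ∀ μ : Weight K N V, ∀ v ∈ genWeightSpace V μ, T v = c μ • v := by
  classical
  let V' (μ : Weight K N V) : Submodule K V := (genWeightSpace V μ).toSubmodule
  let e := LinearEquiv.ofBijective (DirectSum.coeLinearMap V') (isInternal_genWeightSpace K N V)
  refine ⟨DirectSum.toModule K _ V (fun μ ↦ c μ • (V' μ).subtype) ∘ₗ e.symm.toLinearMap,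
    fun μ v hv ↦ ?_⟩
  have hev : e.symm v = DirectSum.lof K _ (fun μ ↦ V' μ) μ ⟨v, hv⟩ :=
    e.symm_apply_eq.2 (DirectSum.coeLinearMap_lof V' μ ⟨v, hv⟩).symm
  simp [hev]

lemma exists_neg_weight {B : LinearMap.BilinForm K V}
    (hB : ∀ (x : N) v w, B ⁅x, v⁆ w = -B v ⁅x, w⁆) (hBsep : B.SeparatingLeft)
    (μ : Weight K N V) : ∃ ν : Weight K N V, ∀ x, ν x = -μ x := by
  by_contra! hμ
  obtain ⟨v, hv, hv0⟩ := μ.exists_ne_zero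
  have hBv : B v = 0 := linearMap_ext_genWeightSpace fun ν w hw ↦ by
    obtain ⟨x, hx⟩ := hμ ν
    exact apply_eq_zero_of_mem_genWeightSpace hB
      (fun h ↦ hx (eq_neg_of_add_eq_zero_right h)) hv hw
  exact hv0 (hBsep v fun w ↦ by rw [hBv, LinearMap.zero_apply])

lemma isSkewAdjoint_of_eq_smul_on_genWeightSpace {B : LinearMap.BilinForm K V}
    (hB : ∀ (x : N) v w, B ⁅x, v⁆ w = -B v ⁅x, w⁆) {c : Weight K N V → K}
    (hc : ∀ μ ν : Weight K N V, (∀ x, ν x = -μ x) → c ν = -c μ) {T : Module.End K V}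
    (hT : ∀ μ : Weight K N V, ∀ v ∈ genWeightSpace V μ, T v = c μ • v) : B.IsSkewAdjoint T := by
  suffices B ∘ₗ T = B.compl₂ (-T) from fun v w ↦ LinearMap.congr_fun₂ this v w
  refine linearMap_ext_genWeightSpace (N := N) fun μ v hv ↦
    linearMap_ext_genWeightSpace (N := N) fun ν w hw ↦ ?_
  have hTB : B (T v) w = c μ * B v w ∧ B v ((-T) w) = -c ν * B v w := by
    simp [hT μ v hv, hT ν w hw]
  change B (T v) w = B v ((-T) w)
  rw [hTB.1, hTB.2]
  by_cases h : ∀ x, ν x = -μ x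
  · rw [hc μ ν h, neg_neg]
  · push Not at h
    obtain ⟨x, hx⟩ := h
    rw [apply_eq_zero_of_mem_genWeightSpace hB (fun h ↦ hx (eq_neg_of_add_eq_zero_right h)) hv hw,
      mul_zero, mul_zero]

end WeightSpaces

section CartanSubalgebra

variable {K L V : Type*} [Field K] [LieRing L] [LieAlgebra K L]
  {H : LieSubalgebra K L} [AddCommGroup V] [Module K V] [FiniteDimensional K V]
  [LieRingModule L V] [LieModule K L V] [IsFaithful K L V]

lemma exists_weight_eval_eq_of_lie_eq_smul [H.IsCartanSubalgebra] [IsTriangularizable K H V]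
    {c : Weight K H V → K} {y : L}
    (hy : ∀ μ : Weight K H V, ∀ v ∈ genWeightSpace V μ, ⁅y, v⁆ = c μ • v) :
    ∃ h : H, ∀ μ : Weight K H V, μ h = c μ := by
  have lie_eq_zero (x : H) : ⁅y, (x : L)⁆ = 0 := by
    rw [← toEnd_eq_zero_iff (R := K) (L := L) (M := V)]
    refine linearMap_ext_genWeightSpace (N := H) fun μ v hv ↦ ?_
    have hxv : ⁅(x : L), v⁆ ∈ genWeightSpace V μ := (genWeightSpace V μ).lie_mem (x := x) hv
    simp [hy μ v hv, hy μ _ hxv]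
  have hyH : y ∈ H := by
    rw [← LieSubalgebra.IsCartanSubalgebra.self_normalizing (H := H),
      LieSubalgebra.mem_normalizer_iff]
    intro x hx
    rw [lie_eq_zero ⟨x, hx⟩]
    exact H.zero_mem
  refine ⟨⟨y, hyH⟩, fun μ ↦ ?_⟩
  obtain ⟨v, hv, hv0⟩ := μ.exists_ne_zero
  exact eq_of_apply_eq_smul_of_mem_maxGenEigenspace hv0
    (genWeightSpace_le_genWeightSpaceOf V _ μ hv) (hy μ v hv)

lemma exists_eq_sub_of_rootSpace_ne_bot [LieRing.IsNilpotent H] [IsTriangularizable K H V]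
    {χ : H → K} (hχ : rootSpace H χ ≠ ⊥) : ∃ μ ν : Weight K H V, χ = μ - ν := by
  by_contra! hne
  obtain ⟨x, hx, hx0⟩ := (rootSpace H χ).toSubmodule.ne_bot_iff.1 (by simpa using hχ)
  refine hx0 ((toEnd_eq_zero_iff (R := K) (L := L) (M := V)).1 ?_)
  refine linearMap_ext_genWeightSpace (N := H) fun ν v hv ↦ ?_
  by_contra hxv
  have hmem := lie_mem_genWeightSpace_of_mem_genWeightSpace hx hv
  let μ : Weight K H V := ⟨χ + ν, fun hbot ↦ hxv (by rw [hbot] at hmem; exact hmem)⟩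
  exact hne μ ν (add_sub_cancel_right χ ν).symm

end CartanSubalgebra

section Torsion

variable {L V : Type*} [LieRing L] [LieAlgebra ℂ L]
  {H : LieSubalgebra ℂ L} [H.IsCartanSubalgebra] {P : Set (Module.Dual ℂ H)}
  [AddCommGroup V] [Module ℂ V] [FiniteDimensional ℂ V]
  [LieRingModule L V] [LieModule ℂ L V] [IsFaithful ℂ L V]

variable (V H) in
lemma lieRoots_subset_range_sub_range :
    lieRoots L H ⊆ Set.range (Weight.toLinear ℂ H V) - Set.range (Weight.toLinear ℂ H V) := by
  rintro α ⟨-, hα⟩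
  obtain ⟨μ, ν, hμν⟩ := exists_eq_sub_of_rootSpace_ne_bot (V := V) hα
  exact ⟨_, ⟨μ, rfl⟩, _, ⟨ν, rfl⟩, (DFunLike.coe_injective hμν).symm⟩

variable (V) in
lemma torsion_gammaK_eq_bot (hP : P ⊆ lieRoots L H)
    (hV : ∀ T : Module.End ℂ V, LinearMap.trace ℂ V T = 0 → ∃ y : L, ∀ v, ⁅y, v⁆ = T v) :
    AddCommGroup.torsion (GammaK L H P) = ⊥ := by
  refine (AddSubgroup.eq_bot_iff_forall _).2 fun x hx ↦ ?_
  obtain ⟨x, rfl, m, hm, hmx⟩ := exists_nsmul_mem_of_mem_torsion hx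
  rw [QuotientAddGroup.eq_zero_iff, AddSubgroup.mem_addSubgroupOf]
  refine mem_closure_of_nsmul_mem_closure (K := ℂ) (lieRoots_subset_range_sub_range V H) hP
    (fun f ↦ ?_) x.2 hm hmx
  obtain ⟨T, hT⟩ := exists_end_eq_smul_on_genWeightSpace f
  obtain ⟨t, ht⟩ := exists_trace_sub_smul_one_eq_zero T
  obtain ⟨y, hy⟩ := hV _ ht
  obtain ⟨h, hh⟩ := exists_weight_eval_eq_of_lie_eq_smul (H := H) (c := fun μ ↦ f μ - t) (y := y)
    fun μ v hv ↦ by simp [hy, hT μ v hv, sub_smul]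
  exact ⟨(LinearMap.applyₗ h : Module.Dual ℂ H →ₗ[ℂ] ℂ).toAddMonoidHom, t, hh⟩

lemma add_self_eq_zero_of_mem_torsion_gammaK (hP : P ⊆ lieRoots L H)
    {B : LinearMap.BilinForm ℂ V} (hB : B.SeparatingLeft)
    (hBL : ∀ (x : L) v w, B ⁅x, v⁆ w = -B v ⁅x, w⁆)
    (hV : ∀ T : Module.End ℂ V, B.IsSkewAdjoint T → ∃ y : L, ∀ v, ⁅y, v⁆ = T v)
    {x : GammaK L H P} (hx : x ∈ AddCommGroup.torsion (GammaK L H P)) : x + x = 0 := by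
  have hBH (x : H) (v w : V) : B ⁅x, v⁆ w = -B v ⁅x, w⁆ := hBL x v w
  choose ν hν using exists_neg_weight hBH hB
  have ν_eq {μ μ' : Weight ℂ H V} (h : ∀ x, μ' x = -μ x) : ν μ = μ' :=
    Weight.ext fun x ↦ (hν μ x).trans (h x).symm
  obtain ⟨x, rfl, m, hm, hmx⟩ := exists_nsmul_mem_of_mem_torsion hx
  rw [← QuotientAddGroup.mk_add, QuotientAddGroup.eq_zero_iff, AddSubgroup.mem_addSubgroupOf]
  refine add_self_mem_closure_of_nsmul_mem_closure (K := ℂ)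
    (lieRoots_subset_range_sub_range V H) hP (ν := ν) (fun μ ↦ ν_eq fun x ↦ by rw [hν, neg_neg])
    (fun μ ↦ LinearMap.ext (hν μ)) (fun f hf ↦ ?_) x.2 hm hmx
  obtain ⟨T, hT⟩ := exists_end_eq_smul_on_genWeightSpace f
  obtain ⟨y, hy⟩ := hV T <| isSkewAdjoint_of_eq_smul_on_genWeightSpace hBH
    (fun μ μ' h ↦ by rw [← ν_eq h, hf]) hT
  obtain ⟨h, hh⟩ := exists_weight_eval_eq_of_lie_eq_smul (H := H) (c := f) (y := y)
    fun μ v hv ↦ by rw [hy, hT μ v hv]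
  exact ⟨(LinearMap.applyₗ h : Module.Dual ℂ H →ₗ[ℂ] ℂ).toAddMonoidHom, hh⟩

end Torsion

section Matrix

attribute [local instance 100] LieRing.ofAssociativeRing

lemma isSkewAdjoint_toLinearMap₂'_iff {R ι : Type*} [CommRing R] [Fintype ι] [DecidableEq ι]
    {J : Matrix ι ι R} {T : Module.End R (ι → R)} :
    (Matrix.toLinearMap₂' R J).IsSkewAdjoint T ↔
      LinearMap.toMatrix' T ∈ skewAdjointMatricesLieSubalgebra J := by
  rw [mem_skewAdjointMatricesLieSubalgebra, mem_skewAdjointMatricesSubmodule,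
    Matrix.IsSkewAdjoint, ← isAdjointPair_toLinearMap₂', map_neg, Matrix.toLin'_toMatrix']
  rfl

variable {L ι : Type*} [LieRing L] [LieAlgebra ℂ L] [Fintype ι] [DecidableEq ι]
  {H : LieSubalgebra ℂ L} [H.IsCartanSubalgebra] {P : Set (Module.Dual ℂ H)}

lemma torsion_gammaK_eq_bot_of_equiv_sl (e : L ≃ₗ⁅ℂ⁆ SpecialLinear.sl ι ℂ)
    (hP : P ⊆ lieRoots L H) : AddCommGroup.torsion (GammaK L H P) = ⊥ := by
  let φ : L →ₗ⁅ℂ⁆ Matrix ι ι ℂ := (SpecialLinear.sl ι ℂ).incl.comp e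
  let := LieRingModule.compLieHom (ι → ℂ) φ
  let := LieModule.compLieHom (ι → ℂ) φ
  have : IsFaithful ℂ L (ι → ℂ) := isFaithful_compLieHom (Subtype.val_injective.comp e.injective)
  refine torsion_gammaK_eq_bot (ι → ℂ) hP fun T hT ↦ ?_
  have hT' : LinearMap.toMatrix' T ∈ SpecialLinear.sl ι ℂ := by
    change (LinearMap.toMatrix' T).trace = 0
    rwa [← LinearMap.toMatrix_eq_toMatrix', ← LinearMap.trace_eq_matrix_trace]
  have hφ : φ (e.symm ⟨_, hT'⟩) = LinearMap.toMatrix' T := by simp [φ]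
  exact ⟨e.symm ⟨_, hT'⟩, fun v ↦ by
    rw [LieRingModule.compLieHom_apply, hφ, Matrix.lie_apply, LinearMap.toMatrix'_mulVec]⟩

lemma add_self_eq_zero_of_equiv_skewAdjointMatrices {J : Matrix ι ι ℂ} (hJ : J.det ≠ 0)
    (e : L ≃ₗ⁅ℂ⁆ skewAdjointMatricesLieSubalgebra J) (hP : P ⊆ lieRoots L H)
    {x : GammaK L H P} (hx : x ∈ AddCommGroup.torsion (GammaK L H P)) : x + x = 0 := by
  let φ : L →ₗ⁅ℂ⁆ Matrix ι ι ℂ := (skewAdjointMatricesLieSubalgebra J).incl.comp e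
  let := LieRingModule.compLieHom (ι → ℂ) φ
  let := LieModule.compLieHom (ι → ℂ) φ
  have : IsFaithful ℂ L (ι → ℂ) := isFaithful_compLieHom (Subtype.val_injective.comp e.injective)
  have hB : (Matrix.toLinearMap₂' ℂ J).SeparatingLeft :=
    LinearMap.separatingLeft_toLinearMap₂'_of_det_ne_zero' hJ
  refine add_self_eq_zero_of_mem_torsion_gammaK hP hB (fun y v w ↦ ?_) (fun T hT ↦ ?_) hx
  · have hy : (Matrix.toLinearMap₂' ℂ J).IsSkewAdjoint (Matrix.toLin' (φ y)) :=
      isSkewAdjoint_toLinearMap₂'_iff.2 (by simp [φ])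
    exact (hy v w).trans (map_neg _ _)
  · have hT' := isSkewAdjoint_toLinearMap₂'_iff.1 hT
    have hφ : φ (e.symm ⟨_, hT'⟩) = LinearMap.toMatrix' T := by simp [φ]
    exact ⟨e.symm ⟨_, hT'⟩, fun v ↦ by
      rw [LieRingModule.compLieHom_apply, hφ, Matrix.lie_apply, LinearMap.toMatrix'_mulVec]⟩

end Matrix

theorem classical_torsion_two_torsion_general
    (L : Type*) [LieRing L] [LieAlgebra ℂ L]
    (hclassical :
      (∃ n : ℕ, Nonempty (L ≃ₗ⁅ℂ⁆ SpecialLinear.sl (Fin n) ℂ)) ∨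
      (∃ (ι : Type) (_ : Fintype ι) (_ : DecidableEq ι) (J : Matrix ι ι ℂ),
        J.det ≠ 0 ∧ Nonempty (L ≃ₗ⁅ℂ⁆ skewAdjointMatricesLieSubalgebra J)))
    (H : LieSubalgebra ℂ L) [H.IsCartanSubalgebra]
    (P : Set (Module.Dual ℂ H)) (hP : P ⊆ lieRoots L H) :
    ∀ x ∈ AddCommGroup.torsion (GammaK L H P), x + x = 0 := by
  intro x hx
  obtain ⟨n, ⟨e⟩⟩ | ⟨ι, _, _, J, hJ, ⟨e⟩⟩ := hclassical
  · rw [torsion_gammaK_eq_bot_of_equiv_sl e hP, AddSubgroup.mem_bot] at hx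
    rw [hx, add_zero]
  · exact add_self_eq_zero_of_equiv_skewAdjointMatrices hJ e hP hx

/-- If `𝔤` is a classical simple Lie algebra (`sl(n,ℂ)`, `n ≥ 2`; `so(n,ℂ)`, `n ≥ 5`;
`sp(2n,ℂ)`, `n ≥ 1`), then `Tor(Γ_𝔨)` is an elementary abelian 2-group: every element `x`
satisfies `x + x = 0`. -/
theorem classical_torsion_two_torsion
    (L : Type*) [LieRing L] [LieAlgebra ℂ L] [FiniteDimensional ℂ L]
    [LieAlgebra.IsSimple ℂ L]
    (hclassical :
      (∃ n : ℕ, 2 ≤ n ∧ Nonempty (L ≃ₗ⁅ℂ⁆ ↥(LieAlgebra.SpecialLinear.sl (Fin n) ℂ))) ∨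
      (∃ n : ℕ, 5 ≤ n ∧ Nonempty (L ≃ₗ⁅ℂ⁆ ↥(LieAlgebra.Orthogonal.so (Fin n) ℂ))) ∨
      (∃ n : ℕ, 1 ≤ n ∧ Nonempty (L ≃ₗ⁅ℂ⁆ ↥(LieAlgebra.Symplectic.sp (Fin n) ℂ))))
    (H : LieSubalgebra ℂ L) [H.IsCartanSubalgebra]
    (P : Set (Module.Dual ℂ H))
    (hP : IsClosedSymmetricSubsystem (lieRoots L H) P) :
    ∀ x ∈ AddCommGroup.torsion (GammaK L H P), x + x = 0 := by
  refine classical_torsion_two_torsion_general L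
    (hclassical.imp (fun ⟨n, _, e⟩ ↦ ⟨n, e⟩) ?_) H P hP.1
  rintro (⟨n, -, e⟩ | ⟨n, -, e⟩)
  exacts [⟨Fin n, _, _, 1, by simp, e⟩,
    ⟨Fin n ⊕ Fin n, _, _, Matrix.J (Fin n) ℂ, (Matrix.isUnit_det_J _ _).ne_zero, e⟩]
end
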